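/- For each p, q ∈ Δ(K): the minimum of d(u,v) over information structures u, v with marg_K u = p and marg_K v = q equals Σ_{k∈K} |p_k − q_k|, and the maximum of d(u,v) over such u, v equals 2·(1 − max_{p',q'∈Δ(K)} Σ_{k∈K} min(p_k·q'_k , p'_k·q_k)). -/

import Mathlib

open scoped BigOperators ENNReal

namespace ValueDistance

/-- An information structure: a probability distribution on `K × ℕ × ℕ`
(state, signal of player 1, signal of player 2). -/
abbrev InfoStruct (K : Type) := PMF (K × ℕ × ℕ)

/-- A behavior strategy / garbling : a map `ℕ → Δ(ℕ)`. -/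
abbrev Garbling : Type := ℕ → PMF ℕ

variable {K : Type}

/-- `g` is a payoff function with action bound `L` : values in `[-1,1]`,
`g k i j = -1` when `i ≥ L`, and `g k i j = 1` when `i < L` and `j ≥ L`. -/
def IsPayoffL (L : ℕ) (g : K → ℕ → ℕ → ℝ) : Prop :=
  (∀ k i j, g k i j ∈ Set.Icc (-1 : ℝ) 1) ∧
  (∀ k i j, L ≤ i → g k i j = -1) ∧
  (∀ k i j, i < L → L ≤ j → g k i j = 1)

/-- `g` belongs to the set `𝒢` of payoff functions. -/
def IsPayoff (g : K → ℕ → ℕ → ℝ) : Prop := ∃ L, IsPayoffL L g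

/-- `g` belongs to the set `𝒢₁` of single-agent (player 1) problems. -/
def IsPayoff1 (g : K → ℕ → ℕ → ℝ) : Prop :=
  IsPayoff g ∧ ∀ k i j j', g k i j = g k i j'

/-- Expected payoff in the Bayesian game `Γ(u,g)` when player 1 uses the behavior
strategy `σ` and player 2 uses `τ`. -/
noncomputable def payoff (u : InfoStruct K) (g : K → ℕ → ℕ → ℝ)
    (σ τ : Garbling) : ℝ :=
  ∑' (x : K × ℕ × ℕ) (i : ℕ) (j : ℕ),
    (u x).toReal * (σ x.2.1 i).toReal * (τ x.2.2 j).toReal * g x.1 i j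

/-- The value `val(u,g)` of the zero-sum Bayesian game `Γ(u,g)`
(the common value of `sup inf` and `inf sup` of the expected payoff;
we take `sup inf` as the definition). -/
noncomputable def val (u : InfoStruct K) (g : K → ℕ → ℕ → ℝ) : ℝ :=
  ⨆ σ : Garbling, ⨅ τ : Garbling, payoff u g σ τ

/-- Total variation distance `‖u − v‖`. -/
noncomputable def tv {α : Type} (u v : PMF α) : ℝ :=
  ∑' x : α, |(u x).toReal - (v x).toReal|

/-- `q.u` : player 1's signal garbled through `q`. -/
noncomputable def garbleLeft (q : Garbling) (u : InfoStruct K) : InfoStruct K :=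
  u.bind (fun x => (q x.2.1).map (fun c => (x.1, c, x.2.2)))

/-- `u.q` : player 2's signal garbled through `q`. -/
noncomputable def garbleRight (u : InfoStruct K) (q : Garbling) : InfoStruct K :=
  u.bind (fun x => (q x.2.2).map (fun d => (x.1, x.2.1, d)))

/-- The value-based distance `d(u,v) = sup_{g ∈ 𝒢} |val(u,g) − val(v,g)|`. -/
noncomputable def dVal (u v : InfoStruct K) : ℝ :=
  ⨆ g : {g : K → ℕ → ℕ → ℝ // IsPayoff g}, |val u g.1 - val v g.1|

/-- The single-agent distance `d₁(u,v) = sup_{g ∈ 𝒢₁} |val(u,g) − val(v,g)|`. -/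
noncomputable def d1 (u v : InfoStruct K) : ℝ :=
  ⨆ g : {g : K → ℕ → ℕ → ℝ // IsPayoff1 g}, |val u g.1 - val v g.1|

/-- Marginal of an information structure on `K × ℕ` (state, player 1's signal). -/
noncomputable def marg1 (u : InfoStruct K) : PMF (K × ℕ) :=
  u.map (fun x => (x.1, x.2.1))

/-- Garbling of a single-agent information structure:
`(q.w)(k,c) = Σ_s w(k,s)·q(s)({c})`. -/
noncomputable def garble1 (q : Garbling) (w : PMF (K × ℕ)) : PMF (K × ℕ) :=
  w.bind (fun x => (q x.2).map (fun c => (x.1, c)))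

/-- Marginal of an information structure on the states. -/
noncomputable def margK (u : InfoStruct K) : PMF K := u.map Prod.fst

/-- Marginal of an information structure on `K × ℕ` (state, player 2's signal). -/
noncomputable def margKD (u : InfoStruct K) : PMF (K × ℕ) :=
  u.map (fun x => (x.1, x.2.2))

/-- `σ.q` : on signal `c`, draw `c'` according to `q(c)` and play `σ(c')`. -/
noncomputable def compGarble (σ q : Garbling) : Garbling :=
  fun c => (q c).bind σ

/-- `u ∈ 𝒰(L)` : both players' signals are `< L` with probability 1. -/
def InU (L : ℕ) (u : InfoStruct K) : Prop :=
  ∀ x : K × ℕ × ℕ, u x ≠ 0 → x.2.1 < L ∧ x.2.2 < L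

/-- `q ∈ 𝒬(L)` : garbling with values supported on `{0,…,L−1}`. -/
def GarblingIn (L : ℕ) (q : Garbling) : Prop :=
  ∀ n m, q n m ≠ 0 → m < L

/-- The two players' signals are conditionally independent given the state:
`u(k)·u(k,c,d) = u(k,c)·u(k,d)` for all `k, c, d`
(equivalently `u(c,d|k) = u(c|k)·u(d|k)` whenever `u(k) > 0`). -/
def CondIndep (u : InfoStruct K) : Prop :=
  ∀ (k : K) (c d : ℕ),
    (∑' y : ℕ × ℕ, u (k, y)) * u (k, c, d)
      = (∑' d' : ℕ, u (k, c, d')) * (∑' c' : ℕ, u (k, c', d))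

end ValueDistance

namespace ValueDistance

section Helpers

variable {K : Type}

noncomputable def Ex {α : Type} (μ : PMF α) (f : α → ℝ) : ℝ := ∑' x, (μ x).toReal * f x

lemma summ1 {α : Type} (μ : PMF α) : Summable fun x => (μ x).toReal :=
  ENNReal.summable_toReal μ.tsum_coe_ne_top

lemma tsum1 {α : Type} (μ : PMF α) : ∑' x, (μ x).toReal = 1 := by
  rw [← ENNReal.tsum_toReal_eq (fun a => μ.apply_ne_top a), μ.tsum_coe]; rfl

lemma summE {α : Type} (μ : PMF α) {f : α → ℝ} (hf : ∀ x, |f x| ≤ 1) :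
    Summable fun x => (μ x).toReal * f x := by
  refine Summable.of_norm_bounded (summ1 μ) (fun x => ?_)
  rw [Real.norm_eq_abs, abs_mul, abs_of_nonneg ENNReal.toReal_nonneg]
  exact mul_le_of_le_one_right ENNReal.toReal_nonneg (hf x)

lemma Ex_const {α : Type} (μ : PMF α) (c : ℝ) : Ex μ (fun _ => c) = c := by
  unfold Ex; rw [tsum_mul_right, tsum1, one_mul]

lemma Ex_le {α : Type} (μ : PMF α) {f : α → ℝ} (hf : ∀ x, |f x| ≤ 1) {c : ℝ}
    (h : ∀ x, f x ≤ c) : Ex μ f ≤ c := by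
  rw [← Ex_const μ c]
  exact (summE μ hf).tsum_le_tsum (fun x => mul_le_mul_of_nonneg_left (h x) ENNReal.toReal_nonneg)
    ((summ1 μ).mul_right c)

lemma le_Ex {α : Type} (μ : PMF α) {f : α → ℝ} (hf : ∀ x, |f x| ≤ 1) {c : ℝ}
    (h : ∀ x, c ≤ f x) : c ≤ Ex μ f := by
  rw [← Ex_const μ c]
  exact ((summ1 μ).mul_right c).tsum_le_tsum
    (fun x => mul_le_mul_of_nonneg_left (h x) ENNReal.toReal_nonneg) (summE μ hf)

lemma abs_Ex {α : Type} (μ : PMF α) {f : α → ℝ} (hf : ∀ x, |f x| ≤ 1) : |Ex μ f| ≤ 1 :=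
  abs_le.2 ⟨le_Ex μ hf fun x => (abs_le.1 (hf x)).1, Ex_le μ hf fun x => (abs_le.1 (hf x)).2⟩

lemma summ2 {α β : Type} (μ : PMF α) (κ : α → PMF β) {f : α → β → ℝ}
    (hf : ∀ x y, |f x y| ≤ 1) :
    Summable (Function.uncurry fun x y => (μ x).toReal * (κ x y).toReal * f x y) := by
  have h1 : Summable fun z : α × β => (μ z.1 * κ z.1 z.2).toReal := by
    apply ENNReal.summable_toReal
    rw [ENNReal.tsum_prod (f := fun a b => μ a * κ a b)]
    simp [ENNReal.tsum_mul_left]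
  refine Summable.of_norm_bounded h1 (fun z => ?_)
  rw [Function.uncurry, Real.norm_eq_abs, abs_mul, ENNReal.toReal_mul, abs_of_nonneg (by positivity)]
  exact mul_le_of_le_one_right (by positivity) (hf _ _)

lemma Ex_comm {α β : Type} (μ : PMF α) (ν : PMF β) {f : α → β → ℝ}
    (hf : ∀ x y, |f x y| ≤ 1) :
    Ex μ (fun x => Ex ν (f x)) = Ex ν (fun y => Ex μ (fun x => f x y)) := by
  unfold Ex
  simp_rw [← tsum_mul_left]
  have := (summ2 μ (fun _ => ν) hf).tsum_comm
  simp_rw [← mul_assoc]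
  rw [← this]
  congr 1; ext y; congr 1; ext x; ring

lemma Ex_bind {α β : Type} (μ : PMF α) (κ : α → PMF β) {f : β → ℝ}
    (hf : ∀ x, |f x| ≤ 1) :
    Ex (μ.bind κ) f = Ex μ (fun x => Ex (κ x) f) := by
  unfold Ex
  have := (summ2 μ κ (f := fun _ y => f y) (fun _ => hf)).tsum_comm
  simp_rw [← tsum_mul_left, ← mul_assoc]
  rw [← this]
  congr 1; ext y
  rw [tsum_mul_right, PMF.bind_apply, ENNReal.tsum_toReal_eq]
  · simp_rw [ENNReal.toReal_mul]
  · intro a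
    exact ENNReal.mul_ne_top (μ.apply_ne_top a) ((κ a).apply_ne_top y)

lemma Ex_pure {α : Type} (a : α) (f : α → ℝ) : Ex (PMF.pure a) f = f a := by
  unfold Ex
  rw [tsum_eq_single a]
  · simp
  · intro b hb; simp [PMF.pure_apply, hb]

lemma Ex_map {α β : Type} (μ : PMF α) (h : α → β) {f : β → ℝ}
    (hf : ∀ x, |f x| ≤ 1) : Ex (μ.map h) f = Ex μ (fun x => f (h x)) := by
  rw [PMF.map, Ex_bind _ _ hf]
  simp [Ex_pure]

lemma Ex_fin {α : Type} [Fintype α] (μ : PMF α) (f : α → ℝ) :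
    Ex μ f = ∑ x, (μ x).toReal * f x := tsum_fintype _

lemma sum1 {α : Type} [Fintype α] (μ : PMF α) : ∑ x, (μ x).toReal = 1 := by
  rw [← tsum1 μ, tsum_fintype]

lemma payoff_eq (u : InfoStruct K) (g : K → ℕ → ℕ → ℝ) (σ τ : Garbling) :
    payoff u g σ τ = Ex u (fun x => Ex (σ x.2.1) (fun i => Ex (τ x.2.2) (g x.1 i))) := by
  unfold payoff Ex
  simp_rw [← tsum_mul_left, mul_assoc]

lemma IsPayoff.abs_le {g : K → ℕ → ℕ → ℝ} (hg : IsPayoff g) (k i j) : |g k i j| ≤ 1 := by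
  obtain ⟨L, h, -⟩ := hg
  exact _root_.abs_le.2 (h k i j)

lemma abs_payoff (u : InfoStruct K) {g : K → ℕ → ℕ → ℝ} (hg : IsPayoff g) (σ τ : Garbling) :
    |payoff u g σ τ| ≤ 1 := by
  rw [payoff_eq]
  exact abs_Ex _ fun x => abs_Ex _ fun i => abs_Ex _ fun j => hg.abs_le _ _ _

instance : Nonempty Garbling := ⟨fun n => PMF.pure n⟩

lemma bdd_inf (u : InfoStruct K) {g : K → ℕ → ℕ → ℝ} (hg : IsPayoff g) (σ : Garbling) :
    BddBelow (Set.range fun τ => payoff u g σ τ) :=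
  ⟨-1, by rintro _ ⟨τ, rfl⟩; exact (abs_le.1 (abs_payoff u hg σ τ)).1⟩

lemma bdd_sup (u : InfoStruct K) {g : K → ℕ → ℕ → ℝ} (hg : IsPayoff g) :
    BddAbove (Set.range fun σ : Garbling => ⨅ τ : Garbling, payoff u g σ τ) :=
  ⟨1, by
    rintro _ ⟨σ, rfl⟩
    exact (ciInf_le (bdd_inf u hg σ) σ).trans (abs_le.1 (abs_payoff u hg σ σ)).2⟩

lemma le_val (u : InfoStruct K) {g : K → ℕ → ℕ → ℝ} (hg : IsPayoff g) (σ : Garbling) {c : ℝ}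
    (h : ∀ τ, c ≤ payoff u g σ τ) : c ≤ val u g :=
  (le_ciInf h).trans (le_ciSup (bdd_sup u hg) σ)

lemma val_le (u : InfoStruct K) {g : K → ℕ → ℕ → ℝ} (hg : IsPayoff g) {c : ℝ}
    (h : ∀ σ, ∃ τ, payoff u g σ τ ≤ c) : val u g ≤ c := by
  refine ciSup_le fun σ => ?_
  obtain ⟨τ, hτ⟩ := h σ
  exact (ciInf_le (bdd_inf u hg σ) τ).trans hτ

lemma val_le_val (u v : InfoStruct K) {g : K → ℕ → ℕ → ℝ} (hg : IsPayoff g) {c : ℝ}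
    (h : ∀ σ, ∃ σ', ∀ τ, ∃ τ', payoff u g σ τ' ≤ payoff v g σ' τ + c) :
    val u g ≤ val v g + c := by
  refine ciSup_le fun σ => ?_
  obtain ⟨σ', h⟩ := h σ
  rw [← sub_le_iff_le_add]
  refine le_val v hg σ' fun τ => ?_
  obtain ⟨τ', h⟩ := h τ
  have := ciInf_le (bdd_inf u hg σ) τ'
  linarith

lemma abs_val (u : InfoStruct K) {g : K → ℕ → ℕ → ℝ} (hg : IsPayoff g) : |val u g| ≤ 1 :=
  abs_le.2 ⟨le_val u hg (fun n => PMF.pure n) fun τ => (abs_le.1 (abs_payoff u hg _ τ)).1,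
    val_le u hg fun σ => ⟨σ, (abs_le.1 (abs_payoff u hg _ _)).2⟩⟩

lemma le_dVal (u v : InfoStruct K) {g : K → ℕ → ℕ → ℝ} (hg : IsPayoff g) :
    val u g - val v g ≤ dVal u v := by
  refine (le_abs_self _).trans ?_
  refine le_ciSup (f := fun g : {g : K → ℕ → ℕ → ℝ // IsPayoff g} => |val u g.1 - val v g.1|)
    ⟨2, ?_⟩ ⟨g, hg⟩
  rintro _ ⟨g, rfl⟩
  have h1 := abs_le.1 (abs_val u g.2)
  have h2 := abs_le.1 (abs_val v g.2)
  exact abs_le.2 ⟨by linarith, by linarith⟩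

lemma dVal_le (u v : InfoStruct K) {c : ℝ}
    (h : ∀ g : K → ℕ → ℕ → ℝ, IsPayoff g → val u g ≤ val v g + c ∧ val v g ≤ val u g + c) :
    dVal u v ≤ c := by
  haveI : Nonempty {g : K → ℕ → ℕ → ℝ // IsPayoff g} :=
    ⟨⟨fun _ _ _ => -1, 0, by intro k i j; simp, by simp, by simp⟩⟩
  refine ciSup_le fun g => ?_
  obtain ⟨h1, h2⟩ := h g.1 g.2
  exact abs_le.2 ⟨by linarith, by linarith⟩

lemma margK_apply (u : InfoStruct K) (k : K) : margK u k = ∑' y, u (k, y) := by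
  classical
  unfold margK
  rw [PMF.map_apply, ENNReal.tsum_prod (f := fun a b => if k = a then u (a, b) else 0), tsum_eq_single k]
  · simp
  · intro k' hk'
    simp [hk'.symm]

lemma exists_cond [Fintype K] (u : InfoStruct K) : ∃ κ : K → PMF (ℕ × ℕ),
    ∀ f : K × ℕ × ℕ → ℝ, (∀ x, |f x| ≤ 1) →
      Ex u f = Ex (margK u) (fun k => Ex (κ k) (fun y => f (k, y))) := by
  have key : ∀ k, ∃ κ : PMF (ℕ × ℕ), ∀ y, u (k, y) = margK u k * κ y := by
    intro k
    by_cases h : margK u k = 0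
    · refine ⟨PMF.pure (0, 0), fun y => ?_⟩
      rw [h, zero_mul]
      rw [margK_apply, ENNReal.tsum_eq_zero] at h
      exact h y
    · have ht := (margK u).apply_ne_top k
      have h' := h
      have ht' := ht
      rw [margK_apply] at h' ht'
      refine ⟨PMF.normalize (fun y => u (k, y)) h' ht', fun y => ?_⟩
      rw [PMF.normalize_apply, ← margK_apply, mul_comm, mul_assoc, ENNReal.inv_mul_cancel h ht,
        mul_one]
  choose κ hκ using key
  refine ⟨κ, fun f hf => ?_⟩
  unfold Ex
  rw [(summE u hf).tsum_prod]
  congr 1; ext k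
  rw [← tsum_mul_left]
  congr 1; ext y
  rw [hκ, ENNReal.toReal_mul, mul_assoc]

/-- the main estimate -/
lemma upper_one [Fintype K] (u v : InfoStruct K) (p' q' : PMF K)
    {g : K → ℕ → ℕ → ℝ} (hg : IsPayoff g) :
    val u g ≤ val v g + 2 * (1 - ∑ k, min ((margK u k).toReal * (q' k).toReal)
      ((p' k).toReal * (margK v k).toReal)) := by
  classical
  obtain ⟨κ, hκ⟩ := exists_cond u
  obtain ⟨κ', hκ'⟩ := exists_cond v
  refine val_le_val u v hg fun σ => ?_
  set a : K → PMF ℕ := fun k => (κ k).bind fun y => σ y.1 with ha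
  refine ⟨fun _ => p'.bind a, fun τ => ?_⟩
  set b : K → PMF ℕ := fun k => (κ' k).bind fun y => τ y.2 with hb
  refine ⟨fun _ => q'.bind b, ?_⟩
  set G : K → K → K → ℝ := fun k c d => Ex (a c) fun i => Ex (b d) (g k i) with hG
  have hG1 : ∀ k c d, |G k c d| ≤ 1 := fun k c d =>
    abs_Ex _ fun i => abs_Ex _ fun j => hg.abs_le _ _ _
  have h1 : payoff u g σ (fun _ => q'.bind b)
      = ∑ k, ∑ d, (margK u k).toReal * (q' d).toReal * G k k d := by
    rw [payoff_eq, hκ _ (fun x => abs_Ex _ fun i => abs_Ex _ fun j => hg.abs_le _ _ _), Ex_fin]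
    congr 1; ext k
    simp_rw [mul_assoc, ← Finset.mul_sum]
    congr 1
    rw [← Ex_fin q' (fun d => G k k d)]
    simp only [hG]
    rw [← Ex_comm (a k) q' (fun x y => abs_Ex _ fun j => hg.abs_le _ _ _)]
    rw [ha, Ex_bind _ _ (fun x => abs_Ex _ fun d => abs_Ex _ fun j => hg.abs_le _ _ _)]
    congr 1; ext y; congr 1; ext i
    rw [Ex_bind _ _ (fun j => hg.abs_le _ _ _)]
  have h2 : payoff v g (fun _ => p'.bind a) τ
      = ∑ k, ∑ c, (margK v k).toReal * (p' c).toReal * G k c k := by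
    rw [payoff_eq, hκ' _ (fun x => abs_Ex _ fun i => abs_Ex _ fun j => hg.abs_le _ _ _), Ex_fin]
    congr 1; ext k
    simp_rw [mul_assoc, ← Finset.mul_sum]
    congr 1
    rw [← Ex_fin p' (fun c => G k c k)]
    simp only [hG]
    rw [Ex_comm (κ' k) (p'.bind a) (fun x y => abs_Ex _ fun j => hg.abs_le _ _ _)]
    rw [Ex_bind _ _ (fun x => abs_Ex _ fun d => abs_Ex _ fun j => hg.abs_le _ _ _)]
    congr 1; ext c; congr 1; ext i
    rw [hb, Ex_bind _ _ (fun j => hg.abs_le _ _ _)]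
  have e1 : payoff u g σ (fun _ => q'.bind b)
      ≤ 1 + ∑ k, (margK u k).toReal * (q' k).toReal * (G k k k - 1) := by
    rw [h1]
    calc _ ≤ ∑ k, ∑ d, ((margK u k).toReal * (q' d).toReal +
          if k = d then (margK u k).toReal * (q' d).toReal * (G k k d - 1) else 0) := by
            refine Finset.sum_le_sum fun k _ => Finset.sum_le_sum fun d _ => ?_
            split_ifs with h
            · linarith
            · rw [add_zero]
              exact mul_le_of_le_one_right (by positivity) (abs_le.1 (hG1 _ _ _)).2
      _ = _ := by
            simp_rw [Finset.sum_add_distrib, ← Finset.mul_sum, sum1]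
            simp [sum1]
  have e2 : -1 + ∑ k, (margK v k).toReal * (p' k).toReal * (G k k k + 1)
      ≤ payoff v g (fun _ => p'.bind a) τ := by
    rw [h2]
    calc _ = ∑ k, ∑ d, (-((margK v k).toReal * (p' d).toReal) +
          if k = d then (margK v k).toReal * (p' d).toReal * (G k d k + 1) else 0) := by
            simp_rw [Finset.sum_add_distrib, Finset.sum_neg_distrib, ← Finset.mul_sum, sum1]
            simp [sum1]
      _ ≤ _ := by
            refine Finset.sum_le_sum fun k _ => Finset.sum_le_sum fun d _ => ?_
            have h0 : 0 ≤ (margK v k).toReal * (p' d).toReal := by positivity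
            split_ifs with h
            · linarith
            · nlinarith [(abs_le.1 (hG1 k d k)).1]
  have e3 : ∑ k, (margK u k).toReal * (q' k).toReal * (G k k k - 1)
      - ∑ k, (margK v k).toReal * (p' k).toReal * (G k k k + 1)
      ≤ - 2 * ∑ k, min ((margK u k).toReal * (q' k).toReal)
      ((p' k).toReal * (margK v k).toReal) := by
    rw [← Finset.sum_sub_distrib, Finset.mul_sum]
    refine Finset.sum_le_sum fun k _ => ?_
    have m1 := min_le_left ((margK u k).toReal * (q' k).toReal)
      ((p' k).toReal * (margK v k).toReal)
    have m2 := min_le_right ((margK u k).toReal * (q' k).toReal)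
      ((p' k).toReal * (margK v k).toReal)
    obtain ⟨g1, g2⟩ := abs_le.1 (hG1 k k k)
    nlinarith [mul_le_mul_of_nonneg_right m1 (show 0 ≤ 1 - G k k k by linarith),
      mul_le_mul_of_nonneg_right m2 (show 0 ≤ 1 + G k k k by linarith)]
  linarith

noncomputable def FF [Fintype K] (p q p' q' : PMF K) : ℝ :=
  ∑ k : K, min ((p k).toReal * (q' k).toReal) ((p' k).toReal * (q k).toReal)

lemma toReal_le_one {α : Type} (μ : PMF α) (a : α) : (μ a).toReal ≤ 1 :=
  ENNReal.toReal_le_of_le_ofReal zero_le_one (by simpa using μ.coe_le_one a)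

lemma FF_le_one [Fintype K] (p q p' q' : PMF K) : FF p q p' q' ≤ 1 := by
  unfold FF
  rw [← sum1 p]
  refine Finset.sum_le_sum fun k _ => (min_le_left _ _).trans ?_
  exact mul_le_of_le_one_right ENNReal.toReal_nonneg (toReal_le_one _ _)

lemma FF_nonneg [Fintype K] (p q p' q' : PMF K) : 0 ≤ FF p q p' q' :=
  Finset.sum_nonneg fun k _ => le_min (by positivity) (by positivity)

lemma FF_swap [Fintype K] (p q p' q' : PMF K) : FF p q p' q' = FF q p q' p' := by
  unfold FF
  congr 1; ext k
  rw [min_comm, mul_comm (p' k).toReal, mul_comm (p k).toReal]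

lemma FF_le_sup [Fintype K] (p q p' q' : PMF K) :
    FF p q p' q' ≤ ⨆ p' : PMF K, ⨆ q' : PMF K, FF p q p' q' := by
  haveI : Nonempty (PMF K) := ⟨p⟩
  refine le_ciSup_of_le ⟨1, ?_⟩ p' (le_ciSup_of_le ⟨1, ?_⟩ q' le_rfl)
  · rintro _ ⟨p', rfl⟩
    exact ciSup_le fun q' => FF_le_one p q p' q'
  · rintro _ ⟨q', rfl⟩
    exact FF_le_one p q p' q'

lemma sup_FF_le [Fintype K] (p q : PMF K) {c : ℝ} (h : ∀ p' q', FF p q p' q' ≤ c) :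
    ⨆ p' : PMF K, ⨆ q' : PMF K, FF p q p' q' ≤ c := by
  haveI : Nonempty (PMF K) := ⟨p⟩
  exact ciSup_le fun p' => ciSup_le fun q' => h p' q'

lemma exists_pmf [Fintype K] (w : K → ℝ) (h0 : ∀ k, 0 ≤ w k) (h1 : ∑ k, w k = 1) :
    ∃ μ : PMF K, ∀ k, (μ k).toReal = w k := by
  refine ⟨PMF.ofFintype (fun k => ENNReal.ofReal (w k)) ?_, fun k => ?_⟩
  · rw [← ENNReal.ofReal_sum_of_nonneg (fun k _ => h0 k), h1, ENNReal.ofReal_one]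
  · simp [h0 k]

/-- two-constraint linear programming duality -/
lemma duality [Fintype K] (p q : PMF K) (M : ℝ) (hM : ∀ p' q', FF p q p' q' ≤ M) :
    ∃ α β : ℝ, 0 ≤ α ∧ 0 ≤ β ∧ α + β ≤ M ∧
      ∀ k, (p k).toReal * (q k).toReal ≤ α * (q k).toReal + β * (p k).toReal := by
  classical
  by_cases hS : ∀ k, (p k).toReal * (q k).toReal = 0
  · refine ⟨0, 0, le_rfl, le_rfl, ?_, fun k => ?_⟩
    · simpa using (FF_nonneg p q p p).trans (hM p p)
    · rw [hS k]; simp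
  push Not at hS
  obtain ⟨k0, hk0⟩ := hS
  have hMpos : 0 < M := by
    refine lt_of_lt_of_le ?_ (hM (PMF.pure k0) (PMF.pure k0))
    unfold FF
    refine lt_of_lt_of_le ?_ (Finset.single_le_sum (fun k _ => ?_) (Finset.mem_univ k0))
    · have h1 : 0 < (p k0).toReal :=
        lt_of_le_of_ne ENNReal.toReal_nonneg (Ne.symm (left_ne_zero_of_mul hk0))
      have h2 : 0 < (q k0).toReal :=
        lt_of_le_of_ne ENNReal.toReal_nonneg (Ne.symm (right_ne_zero_of_mul hk0))
      simp [h1, h2]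
    · exact le_min (by positivity) (by positivity)
  set P : K → ℝ := fun k => (p k).toReal with hP
  set Q : K → ℝ := fun k => (q k).toReal with hQ
  have hP0 : ∀ k, 0 ≤ P k := fun k => ENNReal.toReal_nonneg
  have hQ0 : ∀ k, 0 ≤ Q k := fun k => ENNReal.toReal_nonneg
  set A : Set (ℝ × ℝ) := Set.Iio (1 / M) ×ˢ Set.Iio (1 / M) with hA
  set B : Set (ℝ × ℝ) := {z | ∃ w : K → ℝ, (∀ k, 0 ≤ w k) ∧ ∑ k, w k = 1 ∧
    (∀ k, P k * Q k = 0 → w k = 0) ∧ z = (∑ k, w k / P k, ∑ k, w k / Q k)} with hB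
  have hBc : Convex ℝ B := by
    rintro _ ⟨w, hw0, hw1, hws, rfl⟩ _ ⟨w', hw0', hw1', hws', rfl⟩ a b ha hb hab
    refine ⟨fun k => a * w k + b * w' k, fun k => ?_, ?_, fun k hk => ?_, ?_⟩
    · have := hw0 k; have := hw0' k; positivity
    · rw [Finset.sum_add_distrib, ← Finset.mul_sum, ← Finset.mul_sum, hw1, hw1']; linarith
    · simp [hws k hk, hws' k hk]
    · ext <;> simp [Finset.mul_sum, ← Finset.sum_add_distrib, add_div, mul_div_assoc]
  have hdisj : Disjoint A B := by
    rw [Set.disjoint_left]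
    rintro z ⟨hz1, hz2⟩ ⟨w, hw0, hw1, hws, rfl⟩
    simp only [Set.mem_Iio] at hz1 hz2
    set z1 := ∑ k, w k / P k with hz1d
    set z2 := ∑ k, w k / Q k with hz2d
    have hpos : ∀ R : K → ℝ, (∀ k, 0 ≤ R k) → (∀ k, R k = 0 → w k = 0) →
        0 < ∑ k, w k / R k := by
      intro R hR hR'
      refine lt_of_le_of_ne (Finset.sum_nonneg fun k _ => div_nonneg (hw0 k) (hR k)) fun h => ?_
      have := (Finset.sum_eq_zero_iff_of_nonneg
        (fun k _ => div_nonneg (hw0 k) (hR k))).1 h.symm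
      have h0 : ∑ k, w k = 0 := Finset.sum_eq_zero fun k hk => by
        rcases div_eq_zero_iff.1 (this k hk) with h | h
        · exact h
        · exact hR' k h
      rw [hw1] at h0
      exact one_ne_zero h0
    have hz1p : 0 < z1 := hpos P hP0 fun k hk => hws k (by rw [hk, zero_mul])
    have hz2p : 0 < z2 := hpos Q hQ0 fun k hk => hws k (by rw [hk, mul_zero])
    obtain ⟨p', hp'⟩ := exists_pmf (fun k => w k / Q k / z2)
      (fun k => div_nonneg (div_nonneg (hw0 k) (hQ0 k)) hz2p.le)
      (by rw [← Finset.sum_div]; exact div_self hz2p.ne')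
    obtain ⟨q', hq'⟩ := exists_pmf (fun k => w k / P k / z1)
      (fun k => div_nonneg (div_nonneg (hw0 k) (hP0 k)) hz1p.le)
      (by rw [← Finset.sum_div]; exact div_self hz1p.ne')
    have hlt : M < FF p q p' q' := by
      have hm : M < min (1 / z1) (1 / z2) := by
        apply lt_min
        · exact (lt_one_div hz1p hMpos).1 hz1
        · exact (lt_one_div hz2p hMpos).1 hz2
      refine lt_of_lt_of_le hm ?_
      have : min (1 / z1) (1 / z2) = ∑ k, w k * min (1 / z1) (1 / z2) := by
        rw [← Finset.sum_mul, hw1, one_mul]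
      rw [this]
      unfold FF
      refine Finset.sum_le_sum fun k _ => ?_
      rw [hp', hq']
      change _ ≤ min (P k * (w k / P k / z1)) (w k / Q k / z2 * Q k)
      by_cases hk : P k * Q k = 0
      · simp [hws k hk]
      · have hPk := left_ne_zero_of_mul hk
        have hQk := right_ne_zero_of_mul hk
        have r1 : P k * (w k / P k / z1) = w k * (1 / z1) := by field_simp
        have r2 : w k / Q k / z2 * Q k = w k * (1 / z2) := by field_simp
        rw [r1, r2]
        exact le_min (mul_le_mul_of_nonneg_left (min_le_left _ _) (hw0 k))
          (mul_le_mul_of_nonneg_left (min_le_right _ _) (hw0 k))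
    exact absurd (hM p' q') (not_le.2 hlt)
  obtain ⟨f, c, hfA, hfB⟩ := geometric_hahn_banach_open
    ((convex_Iio (1 / M)).prod (convex_Iio (1 / M))) (isOpen_Iio.prod isOpen_Iio) hBc hdisj
  set l := f (1, 0) with hl
  set m := f (0, 1) with hm
  have hf : ∀ x y : ℝ, f (x, y) = x * l + y * m := by
    intro x y
    have : ((x, y) : ℝ × ℝ) = x • (1, 0) + y • (0, 1) := by ext <;> simp
    rw [this, map_add, map_smul, map_smul]; rfl
  have hA' : ∀ s t : ℝ, 0 < s → 0 < t → (1 / M - s) * l + (1 / M - t) * m < c := by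
    intro s t hs ht
    rw [← hf]
    exact hfA _ ⟨by simpa using hs, by simpa using ht⟩
  have hB' : ∀ k, P k * Q k ≠ 0 → c ≤ 1 / P k * l + 1 / Q k * m := by
    intro k hk
    rw [← hf]
    refine hfB _ ⟨fun j => if j = k then 1 else 0, fun j => ?_, by simp, fun j hj => ?_, ?_⟩
    · dsimp only; split_ifs <;> norm_num
    · dsimp only; rw [if_neg]; rintro rfl; exact hk hj
    · simp [ite_div]
  have hl0 : 0 ≤ l := by
    by_contra hneg
    push Not at hneg
    have h1 := hA' 1 1 one_pos one_pos
    have h2 := hA' (1 + (c - ((1 / M - 1) * l + (1 / M - 1) * m)) / (-l)) 1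
      (by have := div_pos (sub_pos.2 h1) (neg_pos.2 hneg); linarith) one_pos
    have h3 : (c - ((1 / M - 1) * l + (1 / M - 1) * m)) / (-l) * l
        = -(c - ((1 / M - 1) * l + (1 / M - 1) * m)) := by
      have := hneg.ne
      field_simp
    nlinarith
  have hm0 : 0 ≤ m := by
    by_contra hneg
    push Not at hneg
    have h1 := hA' 1 1 one_pos one_pos
    have h2 := hA' 1 (1 + (c - ((1 / M - 1) * l + (1 / M - 1) * m)) / (-m)) one_pos
      (by have := div_pos (sub_pos.2 h1) (neg_pos.2 hneg); linarith)
    have h3 : (c - ((1 / M - 1) * l + (1 / M - 1) * m)) / (-m) * m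
        = -(c - ((1 / M - 1) * l + (1 / M - 1) * m)) := by
      have := hneg.ne
      field_simp
    nlinarith
  have hlm : 0 < l + m := by
    rcases (add_nonneg hl0 hm0).lt_or_eq with h | h
    · exact h
    · exfalso
      have hl' : l = 0 := by linarith
      have hm' : m = 0 := by linarith
      have h1 := hA' 1 1 one_pos one_pos
      have h2 := hB' k0 hk0
      rw [hl', hm'] at h1 h2
      linarith
  have hc : (l + m) / M ≤ c := by
    refine le_of_forall_pos_le_add fun ε hε => ?_
    have hd : 0 < ε / (l + m) := div_pos hε hlm
    have h1 := hA' (ε / (l + m)) (ε / (l + m)) hd hd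
    have h2 : ε / (l + m) * (l + m) = ε := div_mul_cancel₀ _ hlm.ne'
    have h3 : (l + m) / M = 1 / M * (l + m) := by ring
    rw [h3]
    nlinarith
  refine ⟨l * M / (l + m), m * M / (l + m), by positivity, by positivity, ?_, fun k => ?_⟩
  · rw [← add_div, ← add_mul, mul_comm, mul_div_assoc, div_self hlm.ne', mul_one]
  · change P k * Q k ≤ _ * Q k + _ * P k
    by_cases hk : P k * Q k = 0
    · rw [hk]
      have := hP0 k; have := hQ0 k
      positivity
    · have hPk : 0 < P k := lt_of_le_of_ne (hP0 k) (Ne.symm (left_ne_zero_of_mul hk))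
      have hQk : 0 < Q k := lt_of_le_of_ne (hQ0 k) (Ne.symm (right_ne_zero_of_mul hk))
      have h1 := hc.trans (hB' k hk)
      have h2 : (l + m) / M * (M / (l + m) * (P k * Q k)) ≤
          (1 / P k * l + 1 / Q k * m) * (M / (l + m) * (P k * Q k)) :=
        mul_le_mul_of_nonneg_right h1 (by positivity)
      have h3 : (l + m) / M * (M / (l + m) * (P k * Q k)) = P k * Q k := by field_simp
      have h4 : (1 / P k * l + 1 / Q k * m) * (M / (l + m) * (P k * Q k))
          = l * M / (l + m) * Q k + m * M / (l + m) * P k := by field_simp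
      rw [h3, h4] at h2
      exact h2

lemma exists_t {p q α β : ℝ} (hp : 0 ≤ p) (hq : 0 ≤ q) (ha : 0 ≤ α) (hb : 0 ≤ β)
    (h : p * q ≤ α * q + β * p) :
    ∃ t : ℝ, |t| ≤ 1 ∧ p * (1 - t) ≤ 2 * α ∧ q * (1 + t) ≤ 2 * β := by
  rcases hp.eq_or_lt with rfl | hp
  · exact ⟨-1, by simp, by simpa using ha, by simpa using hb⟩
  by_cases hc : p ≤ α
  · exact ⟨-1, by simp, by linarith, by simpa using hb⟩
  push Not at hc
  refine ⟨1 - 2 * α / p, ?_, ?_, ?_⟩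
  · have h1 : α / p ≤ 1 := (div_le_one hp).2 hc.le
    have h2 : 0 ≤ α / p := by positivity
    rw [mul_div_assoc]
    exact abs_le.2 ⟨by linarith, by linarith⟩
  · have : p * (1 - (1 - 2 * α / p)) = 2 * α := by field_simp; ring
    exact this.le
  · have : q * (1 + (1 - 2 * α / p)) = 2 * ((p * q - α * q) / p) := by field_simp; ring
    rw [this]
    have : (p * q - α * q) / p ≤ β := by rw [div_le_iff₀ hp]; linarith
    linarith

lemma attain [Fintype K] (p q : PMF K) (M : ℝ) (hM : ∀ p' q', FF p q p' q' ≤ M) :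
    ∃ u v : InfoStruct K, margK u = p ∧ margK v = q ∧ 2 * (1 - M) ≤ dVal u v := by
  classical
  obtain ⟨α, β, ha, hb, hab, h⟩ := duality p q M hM
  have ht := fun k => exists_t ENNReal.toReal_nonneg ENNReal.toReal_nonneg ha hb (h k)
  choose t ht1 htp htq using ht
  set n := Fintype.card K with hn
  set ι : K → ℕ := fun k => (Fintype.equivFin K k : ℕ) with hι
  have hιn : ∀ k, ι k < n := fun k => (Fintype.equivFin K k).2
  have hιi : Function.Injective ι := fun a b hab =>
    (Fintype.equivFin K).injective (Fin.ext hab)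
  set g : K → ℕ → ℕ → ℝ := fun k i j =>
    if i = ι k then (if j = ι k then t k else 1) else if i < n ∧ n ≤ j then 1 else -1 with hgd
  have hg : IsPayoff g := by
    refine ⟨n, fun k i j => ?_, fun k i j hi => ?_, fun k i j hi hj => ?_⟩
    · simp only [hgd]
      split_ifs
      · exact abs_le.1 (ht1 k)
      all_goals norm_num
    · have h1 : i ≠ ι k := (lt_of_lt_of_le (hιn k) hi).ne'
      simp [hgd, h1, hi]
    · have h1 : j ≠ ι k := (lt_of_lt_of_le (hιn k) hj).ne'
      simp [hgd, h1, hi, hj]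
  set u : InfoStruct K := p.map fun k => (k, ι k, 0) with hu
  set v : InfoStruct K := q.map fun k => (k, 0, ι k) with hv
  refine ⟨u, v, ?_, ?_, ?_⟩
  · rw [hu, margK, PMF.map_comp]; exact PMF.map_id p
  · rw [hv, margK, PMF.map_comp]; exact PMF.map_id q
  have h1 : 1 - 2 * α ≤ val u g := by
    refine le_val u hg (fun c => PMF.pure c) fun τ => ?_
    rw [payoff_eq, hu, Ex_map _ _ (fun x => abs_Ex _ fun i => abs_Ex _ fun j => hg.abs_le _ _ _)]
    simp only [Ex_pure]
    rw [Ex_comm _ _ (fun x y => hg.abs_le _ _ _)]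
    refine le_Ex _ (fun j => abs_Ex _ fun k => hg.abs_le _ _ _) fun j => ?_
    rw [Ex_fin]
    by_cases hj : ∃ k0, j = ι k0
    · obtain ⟨k0, rfl⟩ := hj
      calc 1 - 2 * α = ∑ k, ((p k).toReal - if k = k0 then 2 * α else 0) := by
            rw [Finset.sum_sub_distrib, sum1]; simp
        _ ≤ _ := by
            refine Finset.sum_le_sum fun k _ => ?_
            by_cases hk : k = k0
            · subst hk
              simp only [hgd, if_true]
              linarith [htp k]
            · have : ι k0 ≠ ι k := fun h => hk (hιi h.symm)
              simp [hgd, hk, this]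
    · push Not at hj
      simp [hgd, hj, sum1, ha]
  have h2 : val v g ≤ -1 + 2 * β := by
    refine val_le v hg fun σ => ⟨fun c => PMF.pure c, ?_⟩
    rw [payoff_eq, hv, Ex_map _ _ (fun x => abs_Ex _ fun i => abs_Ex _ fun j => hg.abs_le _ _ _)]
    simp only [Ex_pure]
    rw [Ex_comm _ _ (fun x y => hg.abs_le _ _ _)]
    refine Ex_le _ (fun j => abs_Ex _ fun k => hg.abs_le _ _ _) fun i => ?_
    rw [Ex_fin]
    by_cases hi : ∃ k0, i = ι k0
    · obtain ⟨k0, rfl⟩ := hi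
      calc _ ≤ ∑ k, (-(q k).toReal + if k = k0 then 2 * β else 0) := by
            refine Finset.sum_le_sum fun k _ => ?_
            by_cases hk : k = k0
            · subst hk
              simp only [hgd, if_true]
              linarith [htq k]
            · have : ι k0 ≠ ι k := fun h => hk (hιi h.symm)
              simp [hgd, hk, this, not_le.2 (hιn k)]
        _ = -1 + 2 * β := by
            rw [Finset.sum_add_distrib, Finset.sum_neg_distrib, sum1]; simp
    · push Not at hi
      have h3 : ∀ k, ¬ (n ≤ ι k) := fun k => not_le.2 (hιn k)
      simp [hgd, hi, h3, sum1, hb]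
  have := le_dVal u v hg
  linarith

lemma lower [Fintype K] (u v : InfoStruct K) :
    ∑ k : K, |(margK u k).toReal - (margK v k).toReal| ≤ dVal u v := by
  set s : K → ℝ := fun k => SignType.sign ((margK u k).toReal - (margK v k).toReal) with hs
  have hs1 : ∀ k, |s k| ≤ 1 := by
    intro k
    simp only [hs]
    rcases SignType.sign ((margK u k).toReal - (margK v k).toReal) <;> simp
  set g : K → ℕ → ℕ → ℝ := fun k i j => if i = 0 then (if j = 0 then s k else 1) else -1 with hgd
  have hg : IsPayoff g := by
    refine ⟨1, fun k i j => ?_, fun k i j hi => ?_, fun k i j hi hj => ?_⟩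
    · simp only [hgd]
      split_ifs
      · exact abs_le.1 (hs1 k)
      all_goals norm_num
    · simp [hgd, show i ≠ 0 by omega]
    · simp [hgd, show i = 0 by omega, show j ≠ 0 by omega]
  have hm : ∀ w : InfoStruct K, Ex w (fun x => s x.1) = ∑ k, (margK w k).toReal * s k := by
    intro w
    rw [← Ex_fin, margK, Ex_map _ _ hs1]
  have mono : ∀ {w : InfoStruct K} {f h : K × ℕ × ℕ → ℝ}, (∀ x, |f x| ≤ 1) → (∀ x, |h x| ≤ 1) →
      (∀ x, f x ≤ h x) → Ex w f ≤ Ex w h := fun hf hh hle =>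
    (summE _ hf).tsum_le_tsum (fun x => mul_le_mul_of_nonneg_left (hle x) ENNReal.toReal_nonneg)
      (summE _ hh)
  have h1 : ∑ k, (margK u k).toReal * s k ≤ val u g := by
    refine le_val u hg (fun _ => PMF.pure 0) fun τ => ?_
    rw [← hm, payoff_eq]
    simp only [Ex_pure]
    refine mono (fun x => hs1 _) (fun x => abs_Ex _ fun j => hg.abs_le _ _ _) fun x => ?_
    refine le_Ex _ (fun j => hg.abs_le _ _ _) fun j => ?_
    simp only [hgd, if_true]
    split_ifs
    · exact le_rfl
    · exact (abs_le.1 (hs1 _)).2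
  have h2 : val v g ≤ ∑ k, (margK v k).toReal * s k := by
    refine val_le v hg fun σ => ⟨fun _ => PMF.pure 0, ?_⟩
    rw [← hm, payoff_eq]
    simp only [Ex_pure]
    refine mono (fun x => abs_Ex _ fun j => hg.abs_le _ _ _) (fun x => hs1 _) fun x => ?_
    refine Ex_le _ (fun j => hg.abs_le _ _ _) fun j => ?_
    simp only [hgd, if_true]
    split_ifs
    · exact le_rfl
    · exact (abs_le.1 (hs1 _)).1
  refine le_trans ?_ ((sub_le_sub h1 h2).trans (le_dVal u v hg))
  rw [← Finset.sum_sub_distrib]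
  refine Finset.sum_le_sum fun k _ => ?_
  rw [← sub_mul, mul_comm]
  exact (sign_mul_self _).ge

lemma trivial_upper [Fintype K] (p q : PMF K) :
    dVal (p.map fun k => (k, 0, 0)) (q.map fun k => (k, 0, 0)) ≤
      ∑ k : K, |(p k).toReal - (q k).toReal| := by
  have key : ∀ (p q : PMF K) (g : K → ℕ → ℕ → ℝ), IsPayoff g →
      val (p.map fun k => (k, 0, 0)) g ≤ val (q.map fun k => (k, 0, 0)) g
        + ∑ k : K, |(p k).toReal - (q k).toReal| := by
    intro p q g hg
    refine val_le_val _ _ hg fun σ => ⟨σ, fun τ => ⟨τ, ?_⟩⟩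
    rw [payoff_eq, payoff_eq,
      Ex_map _ _ (fun x => abs_Ex _ fun i => abs_Ex _ fun j => hg.abs_le _ _ _),
      Ex_map _ _ (fun x => abs_Ex _ fun i => abs_Ex _ fun j => hg.abs_le _ _ _), Ex_fin, Ex_fin,
      ← Finset.sum_add_distrib]
    refine Finset.sum_le_sum fun k _ => ?_
    have h1 : |Ex (σ 0) fun i => Ex (τ 0) (g k i)| ≤ 1 :=
      abs_Ex _ fun i => abs_Ex _ fun j => hg.abs_le _ _ _
    have h2 := (le_abs_self _).trans_eq (abs_mul ((p k).toReal - (q k).toReal)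
      (Ex (σ 0) fun i => Ex (τ 0) (g k i)))
    have h3 := mul_le_of_le_one_right (abs_nonneg ((p k).toReal - (q k).toReal)) h1
    linarith
  refine dVal_le _ _ fun g hg => ⟨key p q g hg, ?_⟩
  have := key q p g hg
  simp_rw [abs_sub_comm (q _).toReal] at this
  exact this

lemma upper [Fintype K] (u v : InfoStruct K) :
    dVal u v ≤ 2 * (1 - ⨆ p' : PMF K, ⨆ q' : PMF K, FF (margK u) (margK v) p' q') := by
  refine dVal_le _ _ fun g hg => ⟨?_, ?_⟩
  · have := sup_FF_le (margK u) (margK v) (c := 1 - (val u g - val v g) / 2) fun p' q' => by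
      have : _ ≤ _ + 2 * (1 - FF (margK u) (margK v) p' q') := upper_one u v p' q' hg
      linarith
    linarith
  · have := sup_FF_le (margK u) (margK v) (c := 1 - (val v g - val u g) / 2) fun p' q' => by
      have : _ ≤ _ + 2 * (1 - FF (margK v) (margK u) q' p') := upper_one v u q' p' hg
      rw [FF_swap]
      linarith
    linarith

end Helpers

/-- Bounds on the distance between information structures with fixed marginals
`p` and `q` over the state: the minimum of `d(u,v)` is `Σ_k |p_k − q_k|` and the
maximum is `2·(1 − max_{p',q' ∈ Δ(K)} Σ_k min(p_k·q'_k, p'_k·q_k))`. -/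
theorem diameter_bounds (K : Type) [Fintype K] (hK : 2 ≤ Fintype.card K)
    (p q : PMF K) :
    IsLeast {r : ℝ | ∃ u v : InfoStruct K, margK u = p ∧ margK v = q ∧ r = dVal u v}
      (∑ k : K, |(p k).toReal - (q k).toReal|) ∧
    IsGreatest {r : ℝ | ∃ u v : InfoStruct K, margK u = p ∧ margK v = q ∧ r = dVal u v}
      (2 * (1 - ⨆ p' : PMF K, ⨆ q' : PMF K,
        ∑ k : K, min ((p k).toReal * (q' k).toReal) ((p' k).toReal * (q k).toReal))) := by
  refine ⟨⟨?_, ?_⟩, ⟨?_, ?_⟩⟩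
  · have h1 : margK (p.map fun k => (k, 0, 0)) = p := by
      rw [margK, PMF.map_comp]; exact PMF.map_id p
    have h2 : margK (q.map fun k => (k, 0, 0)) = q := by
      rw [margK, PMF.map_comp]; exact PMF.map_id q
    refine ⟨_, _, h1, h2, le_antisymm ?_ (trivial_upper p q)⟩
    have := lower (p.map fun k => (k, 0, 0)) (q.map fun k => (k, 0, 0))
    rwa [h1, h2] at this
  · rintro r ⟨u, v, rfl, rfl, rfl⟩
    exact lower u v
  · obtain ⟨u, v, hu, hv, h⟩ := attain p q _ (FF_le_sup p q)
    refine ⟨u, v, hu, hv, le_antisymm h ?_⟩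
    have := upper u v
    rwa [hu, hv] at this
  · rintro r ⟨u, v, rfl, rfl, rfl⟩
    exact upper u v

end ValueDistance
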